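/- arXiv:0806.4012 — 3 statements merged into one kernel-verified Lean document; each statement's English description precedes it below -/
import Mathlib

section
/- Let P be a finite pure simplicial poset of rank k, let σ = (σ_1, …, σ_m) be a composition of k, and let π = (π_1, …, π_m) be a rearrangement of the parts of σ with π_1 > σ_1. If F is an element of P of rank σ_1 and G is an element of rank π_1 with F < G, then d^σ(F) ≥ d^π(G). -/
/-- `rk` is the rank function of a simplicial poset: every principal order
ideal `[⊥, x]` is order-isomorphic to the Boolean lattice of rank `rk x`. -/
def IsSimplicial {P : Type*} [PartialOrder P] [OrderBot P] (rk : P → ℕ) : Prop :=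
  ∀ x : P, Nonempty (Set.Icc (⊥ : P) x ≃o Finset (Fin (rk x)))

/-- The face-to-flag degree `d^σ(F)`: the number of chains
`F = X_1 < X_2 < ⋯ < X_m` with `rk (X_j) = σ_1 + ⋯ + σ_j` for all `j`. -/
noncomputable def flagDeg {P : Type*} [PartialOrder P] (rk : P → ℕ) {m : ℕ} [NeZero m]
    (σ : Fin m → ℕ) (F : P) : ℕ :=
  Nat.card {X : Fin m → P // X 0 = F ∧ StrictMono X ∧
    ∀ j : Fin m, rk (X j) = ∑ i ∈ Finset.Iic j, σ i}

/- Fix the top `X` of the flags. In the Boolean lattice `[⊥, X]` a flag starting at `F` is a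
labelling of the atoms of `X` in which `σ j` atoms are labelled `j`, and those labelled `0` are the
atoms of `F`. Relabelling a flag that starts at `G` along `e` gives a labelling with block sizes `σ`
in which the atoms labelled `e 0` are those of `G`. Let `A` be the set of atoms of `F` and `A'` the
set of atoms labelled `0`. Both have size `σ 0`, and all of `A` is labelled `e 0` because `F < G`,
so exchanging the labels `0` and `e 0` on `A ∪ A'` preserves the block sizes and makes `A` the block
labelled `0`. Nothing is lost: the atoms of `G` were labelled `e 0`, and outside `G` the labels `0`
and `e 0` have merely been swapped. -/

section

open Finset

theorem nonempty_embedding_of_fiberwise {β γ : Type*} {s t : Set β} (p : β → γ)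
    (h : ∀ c, Nonempty (↥(s ∩ {b | p b = c}) ↪ ↥(t ∩ {b | p b = c}))) : Nonempty (s ↪ t) := by
  let fibers (u : Set β) : u ≃ Σ c, ↥(u ∩ {b | p b = c}) :=
    (Equiv.sigmaFiberEquiv fun b : u => p b).symm.trans
      (Equiv.sigmaCongrRight fun c => Equiv.subtypeSubtypeEquivSubtypeInter u (p · = c))
  exact ⟨(fibers s).toEmbedding.trans
    ((Function.Embedding.sigmaMap (.refl γ) fun c => (h c).some).trans
      (fibers t).symm.toEmbedding)⟩

section Labelling

variable {α ι : Type*} [Fintype α] [DecidableEq ι] {σ : ι → ℕ} {A B : Finset α} {f : α → ι}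
  {i j : ι}

/-- `f` encodes an ordered set partition of `α`: the `j`-th block `{x | f x = j}` has `σ j`
elements, and the `i`-th block is `A`. -/
structure IsLabelling (σ : ι → ℕ) (i : ι) (A : Finset α) (f : α → ι) : Prop where
  card_block : ∀ j, #{x | f x = j} = σ j
  mem_block : ∀ x, f x = i ↔ x ∈ A

theorem IsLabelling.equiv_comp {e : Equiv.Perm ι} (hf : IsLabelling (σ ∘ e) i A f) :
    IsLabelling σ (e i) A (e ∘ f) where
  card_block j := by
    simpa [Equiv.eq_symm_apply] using hf.card_block (e.symm j)
  mem_block x := by simpa using hf.mem_block x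

variable [DecidableEq α]

/-- Exchange the labels `i` and `j` on the union of `A` and the `j`-th block of `f`. It moves a
labelling whose `i`-th block contains `A` to one whose `j`-th block is `A`. -/
def exchangeLabels (i j : ι) (A : Finset α) (f : α → ι) (x : α) : ι :=
  if x ∈ A ∨ f x = j then Equiv.swap i j (f x) else f x

theorem IsLabelling.exchangeLabels_eq_left_iff (hf : IsLabelling σ i B f) (hij : i ≠ j)
    (hAB : A ⊆ B) (x : α) : exchangeLabels i j A f x = i ↔ x ∈ B \ A ∨ f x = j := by
  have := hf.mem_block x
  have := @hAB x
  grind [exchangeLabels]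

theorem IsLabelling.exchangeLabels_eq_right_iff (hf : IsLabelling σ i B f) (hij : i ≠ j)
    (hAB : A ⊆ B) (x : α) : exchangeLabels i j A f x = j ↔ x ∈ A := by
  have := hf.mem_block x
  have := @hAB x
  grind [exchangeLabels]

omit [Fintype α] in
theorem exchangeLabels_eq_iff_of_ne {l : ι} (hi : l ≠ i) (hj : l ≠ j) (x : α) :
    exchangeLabels i j A f x = l ↔ f x = l := by
  grind [exchangeLabels]

theorem IsLabelling.exchange (hf : IsLabelling σ i B f) (hij : i ≠ j) (hAB : A ⊆ B)
    (hA : #A = σ j) : IsLabelling σ j A (exchangeLabels i j A f) where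
  card_block l := by
    rcases eq_or_ne l j with rfl | hj
    · simpa [hf.exchangeLabels_eq_right_iff hij hAB] using hA
    rcases eq_or_ne l i with rfl | hi
    · have hB : B = ({x | f x = l} : Finset α) := by ext x; simp [hf.mem_block]
      have hdisj : Disjoint (B \ A) ({x | f x = j} : Finset α) := by
        grind [Finset.disjoint_left, hf.mem_block]
      calc #{x | exchangeLabels l j A f x = l}
          = #(B \ A ∪ ({x | f x = j} : Finset α)) := by
            congr 1; ext x; simp [hf.exchangeLabels_eq_left_iff hij hAB]
        _ = #(B \ A) + #A := by rw [card_union_of_disjoint hdisj, hf.card_block, hA]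
        _ = σ l := by rw [card_sdiff_add_card_eq_card hAB, hB, hf.card_block]
    · simpa only [exchangeLabels_eq_iff_of_ne hi hj] using hf.card_block l
  mem_block := hf.exchangeLabels_eq_right_iff hij hAB

theorem IsLabelling.exchangeLabels_of_notMem (hf : IsLabelling σ i B f) {x : α} (hx : x ∉ B) :
    exchangeLabels i j A f x = Equiv.swap i j (f x) := by
  have hi : f x ≠ i := fun h => hx ((hf.mem_block x).1 h)
  grind [exchangeLabels]

theorem injOn_exchangeLabels :
    Set.InjOn (exchangeLabels i j A) {f : α → ι | IsLabelling σ i B f} := by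
  intro f hf g hg hfg
  funext x
  by_cases hx : x ∈ B
  · rw [(hf.mem_block x).2 hx, (hg.mem_block x).2 hx]
  · apply (Equiv.swap i j).injective
    rw [← hf.exchangeLabels_of_notMem hx, ← hg.exchangeLabels_of_notMem hx, hfg]

omit [DecidableEq α] in
theorem nonempty_labelling_embedding (e : Equiv.Perm ι) (hi : e i ≠ i) (hAB : A ⊆ B)
    (hA : #A = σ i) :
    Nonempty ({f : α → ι | IsLabelling (σ ∘ e) i B f} ↪ {f : α → ι | IsLabelling σ i A f}) := by
  classical
  have hmaps_comp : Set.MapsTo (e ∘ ·) {f : α → ι | IsLabelling (σ ∘ e) i B f}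
      {f | IsLabelling σ (e i) B f} := fun f hf => hf.equiv_comp
  have hinj : Set.InjOn (exchangeLabels (e i) i A ∘ (e ∘ ·))
      {f : α → ι | IsLabelling (σ ∘ e) i B f} :=
    injOn_exchangeLabels.comp e.injective.comp_left.injOn hmaps_comp
  have hmaps : Set.MapsTo (exchangeLabels (e i) i A ∘ (e ∘ ·))
      {f : α → ι | IsLabelling (σ ∘ e) i B f} {f | IsLabelling σ i A f} :=
    fun f hf => (hmaps_comp hf).exchange hi hAB hA
  exact ⟨⟨_, hmaps.restrict_inj.2 hinj⟩⟩

end Labelling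

section CumulativeBlocks

theorem sum_Iic_injective {ι M : Type*} [PartialOrder ι] [LocallyFiniteOrderBot ι]
    [AddCancelCommMonoid M] :
    Function.Injective fun (a : ι → M) j => ∑ i ∈ Iic j, a i := by
  intro a b h
  funext j
  induction hn : #(Iic j) using Nat.strong_induction_on generalizing j with
  | h n ih =>
    have hlt : ∑ i ∈ Iio j, a i = ∑ i ∈ Iio j, b i :=
      sum_congr rfl fun i hi =>
        ih _ (hn ▸ card_lt_card (Iic_ssubset_Iic.2 (mem_Iio.1 hi))) i rfl
    have hle : ∑ i ∈ Iic j, a i = ∑ i ∈ Iic j, b i := congrFun h j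
    classical
    rw [← Iio_insert, sum_insert (by simp), sum_insert (by simp), hlt] at hle
    exact add_right_cancel hle

variable {α ι : Type*} [LinearOrder ι]

theorem forall_card_eq_iff_forall_card_le [Fintype α] [LocallyFiniteOrderBot ι] {f : α → ι}
    {σ : ι → ℕ} :
    (∀ j, #{x | f x = j} = σ j) ↔ ∀ j, #{x | f x ≤ j} = ∑ i ∈ Iic j, σ i := by
  have hcard (j : ι) : #{x | f x ≤ j} = ∑ i ∈ Iic j, #{x | f x = i} := by
    simpa only [mem_Iic] using (sum_card_fiberwise_eq_card_filter univ (Iic j) f).symm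
  simp only [hcard]
  exact ⟨fun h j => sum_congr rfl fun i _ => h i,
    fun h => congrFun (sum_Iic_injective (funext h))⟩

theorem exists_forall_mem_iff_le_of_monotone [WellFoundedLT ι] {S : ι → Finset α}
    (hS : Monotone S) (hcover : ∀ x, ∃ j, x ∈ S j) :
    ∃ f : α → ι, ∀ x j, x ∈ S j ↔ f x ≤ j := by
  have hleast (x : α) : ∃ i, Minimal (x ∈ S ·) i :=
    exists_minimal_of_wellFoundedLT _ (hcover x)
  choose f hf using hleast
  exact ⟨f, fun x j => ⟨fun hx => not_lt.1 fun hlt => (hf x).not_prop_of_lt hlt hx,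
    fun hle => hS hle (hf x).prop⟩⟩

end CumulativeBlocks

section SimplicialPoset

variable {P : Type*} [PartialOrder P] [OrderBot P] {rk : P → ℕ}

theorem orderIso_apply_self {α : Type*} [Fintype α] {X : P} (φ : Set.Icc ⊥ X ≃o Finset α) :
    φ ⟨X, bot_le, le_rfl⟩ = univ :=
  top_le_iff.1 (φ.symm_apply_le.1 (φ.symm univ).2.2)

theorem IsSimplicial.card_orderIso_apply (h : IsSimplicial rk) {α : Type*} {X : P}
    (φ : Set.Icc ⊥ X ≃o Finset α) (y : Set.Icc ⊥ X) : #(φ y) = rk y := by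
  obtain ⟨ψ⟩ := h y
  have hiff (z : Set.Icc ⊥ X) : (z : P) ∈ Set.Icc ⊥ (y : P) ↔ φ z ∈ (φ y).powerset := by
    simp [mem_powerset]
  let ideal : Set.Icc ⊥ (y : P) ≃ (φ y).powerset :=
    (Equiv.subtypeSubtypeEquivSubtype fun hz => ⟨hz.1, hz.2.trans y.2.2⟩).symm.trans
      (φ.toEquiv.subtypeEquiv hiff)
  have hpow : 2 ^ #(φ y) = 2 ^ rk y := by
    simpa only [Nat.card_eq_fintype_card, Fintype.card_coe, card_powerset, Fintype.card_finset,
      Fintype.card_fin] using Nat.card_congr (ideal.symm.trans ψ.toEquiv)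
  exact Nat.pow_right_injective le_rfl hpow

theorem IsSimplicial.strictMono (h : IsSimplicial rk) : StrictMono rk := by
  intro x y hxy
  obtain ⟨φ⟩ := h y
  have hlt : φ ⟨x, bot_le, hxy.le⟩ < φ ⟨y, bot_le, le_rfl⟩ := φ.lt_iff_lt.2 hxy
  simpa only [h.card_orderIso_apply φ] using card_lt_card hlt

end SimplicialPoset

section Flags

variable {P : Type*} [PartialOrder P] {rk : P → ℕ} {m : ℕ} [NeZero m] {σ : Fin m → ℕ} {F G X : P}

/-- The chains `F = X 0 < X 1 < ⋯` with `rk (X j) = σ 0 + ⋯ + σ j` that `flagDeg rk σ F` counts. -/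
def flagsFrom (rk : P → ℕ) (σ : Fin m → ℕ) (F : P) : Set (Fin m → P) :=
  {Y | Y 0 = F ∧ StrictMono Y ∧ ∀ j, rk (Y j) = ∑ i ∈ Iic j, σ i}

theorem flagDeg_eq_card_flagsFrom : flagDeg rk σ F = Nat.card (flagsFrom rk σ F) :=
  rfl

theorem le_of_mem_flagsFrom {Y : Fin m → P} (hY : Y ∈ flagsFrom rk σ F) : F ≤ Y ⊤ :=
  hY.1 ▸ hY.2.1.monotone bot_le

variable [OrderBot P] {α ι : Type*} [Fintype α] [LinearOrder ι]

/-- The flag below `X` whose `j`-th element has the atoms with label at most `j`, where `φ`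
identifies `[⊥, X]` with the sets of its atoms. -/
def flagOfLabels (φ : Set.Icc ⊥ X ≃o Finset α) (f : α → ι) (j : ι) : P :=
  (φ.symm {x | f x ≤ j} : Set.Icc ⊥ X)

theorem flagOfLabels_injective (φ : Set.Icc ⊥ X ≃o Finset α) :
    Function.Injective (flagOfLabels φ : (α → ι) → ι → P) := by
  intro f g hfg
  have hiff (x : α) (j : ι) : f x ≤ j ↔ g x ≤ j := by
    have hj := φ.symm.injective (Subtype.ext (congrFun hfg j))
    simpa using Finset.ext_iff.1 hj x
  exact funext fun x => le_antisymm ((hiff x _).2 le_rfl) ((hiff x _).1 le_rfl)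

theorem strictMono_flagOfLabels (φ : Set.Icc ⊥ X ≃o Finset α) {f : α → ι}
    (hf : Function.Surjective f) : StrictMono (flagOfLabels φ f) := by
  intro a b hab
  obtain ⟨x, rfl⟩ := hf b
  refine Subtype.coe_lt_coe.2 (φ.symm.lt_iff_lt.2 ?_)
  refine (ssubset_iff_of_subset ?_).2 ⟨x, by simp, by simpa using hab⟩
  exact monotone_filter_right univ fun y _ hy => le_trans hy hab.le

theorem flagOfLabels_top [OrderTop ι] (φ : Set.Icc ⊥ X ≃o Finset α) (f : α → ι) :
    flagOfLabels φ f ⊤ = X := by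
  simp [flagOfLabels, ← orderIso_apply_self φ]

theorem IsLabelling.flagOfLabels_mem (h : IsSimplicial rk) (hpos : ∀ i, 0 < σ i)
    (φ : Set.Icc ⊥ X ≃o Finset α) (hFX : F ≤ X) {f : α → Fin m}
    (hf : IsLabelling σ 0 (φ ⟨F, bot_le, hFX⟩) f) : flagOfLabels φ f ∈ flagsFrom rk σ F := by
  have hsurj : Function.Surjective f := fun j => by
    obtain ⟨x, hx⟩ := card_pos.1 (hf.card_block j ▸ hpos j)
    exact ⟨x, (mem_filter.1 hx).2⟩
  refine ⟨?_, strictMono_flagOfLabels φ hsurj, fun j => ?_⟩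
  · have h0 : ({x | f x ≤ 0} : Finset α) = φ ⟨F, bot_le, hFX⟩ := by
      ext x; simp [hf.mem_block]
    rw [flagOfLabels, h0, φ.symm_apply_apply]
  · rw [flagOfLabels, ← h.card_orderIso_apply φ, φ.apply_symm_apply]
    exact forall_card_eq_iff_forall_card_le.1 hf.card_block j

theorem exists_isLabelling_of_mem_flagsFrom (h : IsSimplicial rk) {Y : Fin m → P}
    (hY : Y ∈ flagsFrom rk σ F) (φ : Set.Icc ⊥ (Y ⊤) ≃o Finset α) :
    ∃ f, IsLabelling σ 0 (φ ⟨F, bot_le, le_of_mem_flagsFrom hY⟩) f ∧ flagOfLabels φ f = Y := by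
  obtain ⟨rfl, hmono, hrk⟩ := hY
  let S (j : Fin m) : Finset α := φ ⟨Y j, bot_le, hmono.monotone le_top⟩
  have hS : Monotone S := fun a b hab => φ.monotone (hmono.monotone hab : Y a ≤ Y b)
  have htop : S ⊤ = univ := orderIso_apply_self φ
  obtain ⟨f, hf⟩ := exists_forall_mem_iff_le_of_monotone hS fun x => ⟨⊤, by simp [htop]⟩
  have hSf (j : Fin m) : ({x | f x ≤ j} : Finset α) = S j := by ext x; simp [hf]
  refine ⟨f, ⟨forall_card_eq_iff_forall_card_le.2 fun j => ?_, fun x => ?_⟩, ?_⟩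
  · rw [hSf, h.card_orderIso_apply φ, hrk]
  · exact nonpos_iff_eq_zero.symm.trans (hf x 0).symm
  · funext j
    simp [flagOfLabels, hSf, S]

theorem bijOn_flagOfLabels (h : IsSimplicial rk) (hpos : ∀ i, 0 < σ i)
    (φ : Set.Icc ⊥ X ≃o Finset α) (hFX : F ≤ X) :
    Set.BijOn (flagOfLabels φ) {f | IsLabelling σ 0 (φ ⟨F, bot_le, hFX⟩) f}
      (flagsFrom rk σ F ∩ {Y | Y ⊤ = X}) := by
  refine ⟨fun f hf => ⟨hf.flagOfLabels_mem h hpos φ hFX, flagOfLabels_top φ f⟩,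
    (flagOfLabels_injective φ).injOn, ?_⟩
  rintro Y ⟨hY, rfl⟩
  exact exists_isLabelling_of_mem_flagsFrom h hY φ

theorem nonempty_flagsFrom_inter_embedding (h : IsSimplicial rk) (hpos : ∀ i, 0 < σ i)
    (e : Equiv.Perm (Fin m)) (hF : rk F = σ 0) (hG : rk G = σ (e 0)) (hFG : F < G) (X : P) :
    Nonempty (↥(flagsFrom rk (σ ∘ e) G ∩ {Y | Y ⊤ = X}) ↪
      ↥(flagsFrom rk σ F ∩ {Y | Y ⊤ = X})) := by
  by_cases hGX : G ≤ X
  · obtain ⟨φ⟩ := h X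
    have he : e 0 ≠ 0 := fun h0 => (h.strictMono hFG).ne (by rw [hF, hG, h0])
    have hsub : φ ⟨F, bot_le, hFG.le.trans hGX⟩ ⊆ φ ⟨G, bot_le, hGX⟩ := φ.monotone hFG.le
    have hcard : #(φ ⟨F, bot_le, hFG.le.trans hGX⟩) = σ 0 := by
      rw [h.card_orderIso_apply φ, hF]
    obtain ⟨g⟩ := nonempty_labelling_embedding e he hsub hcard
    have bijOnG := bijOn_flagOfLabels h (fun i => hpos (e i)) φ hGX
    have bijOnF := bijOn_flagOfLabels h hpos φ (hFG.le.trans hGX)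
    exact ⟨(bijOnG.equiv.symm.toEmbedding.trans g).trans bijOnF.equiv.toEmbedding⟩
  · have : IsEmpty ↥(flagsFrom rk (σ ∘ e) G ∩ {Y | Y ⊤ = X}) :=
      ⟨fun ⟨_, hY, hX⟩ => hGX (hX ▸ le_of_mem_flagsFrom hY)⟩
    exact ⟨.ofIsEmpty⟩

end Flags

end

theorem flagDeg_le_of_lt_general {P : Type*} [PartialOrder P] [OrderBot P] {rk : P → ℕ}
    (h : IsSimplicial rk) {m : ℕ} [NeZero m] {σ : Fin m → ℕ} (hpos : ∀ i, 0 < σ i)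
    (e : Equiv.Perm (Fin m)) {F G : P} (hF : rk F = σ 0) (hG : rk G = σ (e 0)) (hFG : F < G) :
    Nonempty (flagsFrom rk (σ ∘ e) G ↪ flagsFrom rk σ F) :=
  nonempty_embedding_of_fiberwise (fun Y => Y ⊤)
    (nonempty_flagsFrom_inter_embedding h hpos e hF hG hFG)

/-- Let `P` be a finite pure simplicial poset of rank `k`, `σ` a composition of `k`
and `π` a rearrangement of the parts of `σ` with `π_1 > σ_1`.  If `F` has rank `σ_1`,
`G` has rank `π_1` and `F < G`, then `d^σ(F) ≥ d^π(G)`. -/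
theorem flagDeg_le_of_lt
    {P : Type*} [Fintype P] [PartialOrder P] [OrderBot P]
    (rk : P → ℕ) (hsimp : IsSimplicial rk)
    (k : ℕ) (hpure : ∀ x : P, IsMax x → rk x = k)
    {m : ℕ} [NeZero m] (σ π : Fin m → ℕ)
    (hpos : ∀ i, 0 < σ i) (hsum : ∑ i, σ i = k)
    (e : Equiv.Perm (Fin m)) (hπ : π = σ ∘ e)
    (h1 : σ 0 < π 0)
    (F G : P) (hF : rk F = σ 0) (hG : rk G = π 0) (hFG : F < G) :
    flagDeg rk π G ≤ flagDeg rk σ F := by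
  subst hπ
  obtain ⟨g⟩ := flagDeg_le_of_lt_general hsimp hpos e hF hG hFG
  rw [flagDeg_eq_card_flagsFrom, flagDeg_eq_card_flagsFrom]
  exact Nat.card_le_card_of_injective g g.injective
end

section
/- Let P be a finite pure simplicial poset of rank k, let σ = (σ_1, …, σ_m) be a composition of k, and let π = (π_1, …, π_m) be a rearrangement of σ with σ_1 < π_1 and π_l = σ_1 for some l (i.e. π is obtained by moving the part π_1 = σ_l of σ to the front). Then for every rank-σ_1 element F of P, the sum of d^π(G) over all rank-π_1 elements G with F < G equals (π_1 choose σ_1) · d^σ(F). -/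
/-!
If all parts of `σ` after the first are positive, a flag of type `σ` starting at `F` and ending at
`T` is a flag of subsets in the Boolean interval `[F, T]`, so `d^σ(F)` is the multinomial
coefficient of `(σ₂, …, σ_m)` times the number `N(F)` of elements of rank `k = ∑ i, σ i` above `F`.
Counting pairs `G ≤ T` above `F` with `rk G = π₁` and `rk T = k` in two ways shows that the sum of
the `N(G)` is `(k - σ₁ choose π₁ - σ₁) * N(F)`, and the theorem becomes an identity between
multinomial coefficients, which holds because those of `σ` and its rearrangement `π` agree.
-/

open Finset

section Compositions

variable {n : ℕ}

theorem multinomial_univ_comp_perm {ι : Type*} [Fintype ι] (σ : ι → ℕ) (e : Equiv.Perm ι) :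
    Nat.multinomial univ (σ ∘ e) = Nat.multinomial univ σ := by
  simp only [Nat.multinomial, Function.comp_apply, Equiv.sum_comp e σ,
    Equiv.prod_comp e fun i => (σ i).factorial]

theorem multinomial_univ_fin_succ (σ : Fin (n + 1) → ℕ) :
    Nat.multinomial univ σ = (∑ i, σ i).choose (σ 0) * Nat.multinomial univ (Fin.tail σ) := by
  rw [Fin.univ_succ, Nat.multinomial_cons, sum_cons]
  simp only [Nat.multinomial, sum_map, prod_map, Function.Embedding.coeFn_mk, Fin.tail]

theorem choose_mul_multinomial_tail_comp_perm (σ : Fin (n + 1) → ℕ) (e : Equiv.Perm (Fin (n + 1)))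
    (h : σ 0 ≤ σ (e 0)) :
    (∑ i, σ i - σ 0).choose (σ (e 0) - σ 0) * Nat.multinomial univ (Fin.tail (σ ∘ e)) =
      (σ (e 0)).choose (σ 0) * Nat.multinomial univ (Fin.tail σ) := by
  have hσ := multinomial_univ_fin_succ σ
  have hσe := multinomial_univ_fin_succ (σ ∘ e)
  simp only [multinomial_univ_comp_perm, Function.comp_apply, Equiv.sum_comp e σ] at hσe
  have hpos : 0 < (∑ i, σ i).choose (σ 0) :=
    Nat.choose_pos (single_le_sum_of_canonicallyOrdered (mem_univ 0))
  refine Nat.eq_of_mul_eq_mul_left hpos ?_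
  calc (∑ i, σ i).choose (σ 0) *
        ((∑ i, σ i - σ 0).choose (σ (e 0) - σ 0) * Nat.multinomial univ (Fin.tail (σ ∘ e)))
      = (∑ i, σ i).choose (σ (e 0)) * (σ (e 0)).choose (σ 0) *
          Nat.multinomial univ (Fin.tail (σ ∘ e)) := by rw [Nat.choose_mul h, mul_assoc]
    _ = (σ (e 0)).choose (σ 0) * Nat.multinomial univ σ := by rw [hσe, mul_right_comm, mul_comm]
    _ = (∑ i, σ i).choose (σ 0) *
          ((σ (e 0)).choose (σ 0) * Nat.multinomial univ (Fin.tail σ)) := by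
        rw [hσ, mul_left_comm]

theorem sum_Iic_zero {M : Type*} [AddCommMonoid M] (f : Fin (n + 1) → M) :
    ∑ i ∈ Iic 0, f i = f 0 := by
  rw [← bot_eq_zero, Iic_bot, sum_singleton]

theorem sum_Iic_succ_eq_add_sum_tail {M : Type*} [AddCommMonoid M] (f : Fin (n + 1) → M)
    (j : Fin n) :
    ∑ i ∈ Iic j.succ, f i = f 0 + ∑ i ∈ Iic j, Fin.tail f i := by
  rw [← Icc_bot, ← add_sum_Ioc_eq_sum_Icc bot_le, bot_eq_zero, ← Fin.map_succEmb_Iic, sum_map]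
  rfl

/-- The coarsening `(σ₁ + σ₂, σ₃, …)` of a composition `σ = (σ₁, σ₂, σ₃, …)`: deleting the first
element of a flag of type `σ` leaves a flag of type `mergeHead σ`. -/
def mergeHead (σ : Fin (n + 2) → ℕ) : Fin (n + 1) → ℕ :=
  Fin.cons (σ 0 + σ 1) (Fin.tail (Fin.tail σ))

theorem sum_Iic_mergeHead (σ : Fin (n + 2) → ℕ) (j : Fin (n + 1)) :
    ∑ i ∈ Iic j, mergeHead σ i = ∑ i ∈ Iic j.succ, σ i := by
  rw [sum_Iic_succ_eq_add_sum_tail σ]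
  cases j using Fin.cases with
  | zero => rw [sum_Iic_zero, sum_Iic_zero]; rfl
  | succ j => rw [sum_Iic_succ_eq_add_sum_tail, sum_Iic_succ_eq_add_sum_tail, ← add_assoc]; rfl

theorem sum_mergeHead (σ : Fin (n + 2) → ℕ) : ∑ i, mergeHead σ i = ∑ i, σ i := by
  simp [Fin.sum_univ_succ, mergeHead, Fin.tail, add_assoc]

end Compositions

section SimplicialPoset

variable {P : Type*} [PartialOrder P] [OrderBot P] {rk : P → ℕ}

namespace IsSimplicial

theorem card_Iic (h : IsSimplicial rk) (x : P) : Nat.card (Set.Iic x) = 2 ^ rk x := by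
  obtain ⟨f⟩ := h x
  rw [← Set.Icc_bot, Nat.card_congr f.toEquiv]
  simp

theorem exists_finset_orderEmbedding (h : IsSimplicial rk) (T : P) :
    ∃ φ : Finset (Fin (rk T)) ↪o P, (∀ x, x ∈ Set.range φ ↔ x ≤ T) ∧ ∀ s, rk (φ s) = #s := by
  obtain ⟨f⟩ := h T
  let φ : Finset (Fin (rk T)) ↪o P := f.symm.toOrderEmbedding.trans (OrderEmbedding.subtype _)
  have hφ (x : P) : x ∈ Set.range φ ↔ x ≤ T := by
    rw [RelEmbedding.coe_trans, Set.range_comp]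
    simp
  have hlower : IsLowerSet (Set.range φ) :=
    fun x y hyx hx => (hφ y).2 (hyx.trans ((hφ x).1 hx))
  refine ⟨φ, hφ, fun s => Nat.pow_right_injective le_rfl ?_⟩
  calc 2 ^ rk (φ s) = Nat.card (Set.Iic (φ s)) := (h.card_Iic _).symm
    _ = Nat.card (φ '' Set.Iic s) := by rw [φ.image_Iic hlower]
    _ = Nat.card (Set.Iic s) := Nat.card_image_of_injective φ.injective _
    _ = 2 ^ #s := by rw [← coe_Iic, Nat.card_coe_set_eq, Set.ncard_coe_finset, card_Iic_finset]

theorem rk_strictMono (h : IsSimplicial rk) : StrictMono rk := by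
  intro F T hFT
  obtain ⟨φ, hφ, hrk⟩ := h.exists_finset_orderEmbedding T
  obtain ⟨A, rfl⟩ := (hφ F).2 hFT.le
  obtain ⟨B, hB⟩ := (hφ T).2 le_rfl
  have hcard : #A < #B := card_lt_card (φ.lt_iff_lt.1 (hFT.trans_eq hB.symm))
  rwa [← hrk, ← hrk, hB] at hcard

variable [Fintype P] [DecidableLE P]

theorem card_filter_rk_eq_between (h : IsSimplicial rk) {F T : P} (hFT : F ≤ T) {r : ℕ}
    (hr : rk F ≤ r) :
    #{G | (rk G = r ∧ F ≤ G) ∧ G ≤ T} = (rk T - rk F).choose (r - rk F) := by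
  obtain ⟨φ, hφ, hrk⟩ := h.exists_finset_orderEmbedding T
  obtain ⟨A, rfl⟩ := (hφ F).2 hFT
  have himage : ({G | (rk G = r ∧ φ A ≤ G) ∧ G ≤ T} : Finset P) =
      ((univ.powersetCard r).filter (A ⊆ ·)).map φ.toEmbedding := by
    ext G
    rw [mem_filter_univ, ← hφ]
    constructor
    · rintro ⟨⟨hG, hAG⟩, s, rfl⟩
      exact mem_map_of_mem φ.toEmbedding (mem_filter.2
        ⟨mem_powersetCard_univ.2 (hrk s ▸ hG), φ.le_iff_le.1 hAG⟩)
    · simp only [mem_map, mem_filter, mem_powersetCard_univ]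
      rintro ⟨s, ⟨hs, hAs⟩, rfl⟩
      exact ⟨⟨(hrk s).trans hs, φ.le_iff_le.2 hAs⟩, s, rfl⟩
  rw [himage, card_map, card_filter_powersetCard_subset _ _ _ (subset_univ A) (hrk A ▸ hr),
    card_univ, Fintype.card_fin, hrk]

theorem card_filter_rk_eq_rk_and_le (h : IsSimplicial rk) (F : P) :
    #{T | rk T = rk F ∧ F ≤ T} = 1 := by
  rw [card_eq_one]
  refine ⟨F, ?_⟩
  ext T
  simp only [mem_filter_univ, mem_singleton]
  refine ⟨fun ⟨hT, hFT⟩ => ?_, fun hT => ?_⟩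
  · exact (hFT.eq_or_lt.resolve_right fun hlt => (h.rk_strictMono hlt).ne' hT).symm
  · simp [hT]

theorem sum_card_filter_rk_eq_and_le (h : IsSimplicial rk) [DecidableLT P] {F : P} {r : ℕ}
    (hr : rk F < r) (k : ℕ) :
    ∑ G with rk G = r ∧ F < G, #{T | rk T = k ∧ G ≤ T} =
      (k - rk F).choose (r - rk F) * #{T | rk T = k ∧ F ≤ T} := by
  have hlt (G : P) : rk G = r ∧ F < G ↔ rk G = r ∧ F ≤ G :=
    and_congr_right fun hG => ⟨le_of_lt, fun hFG => hFG.lt_of_ne (by rintro rfl; omega)⟩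
  calc ∑ G with rk G = r ∧ F < G, #{T | rk T = k ∧ G ≤ T}
      = ∑ G with rk G = r ∧ F ≤ G, #{T ∈ ({T | rk T = k ∧ F ≤ T} : Finset P) | G ≤ T} := by
        simp only [hlt, filter_filter]
        refine sum_congr rfl fun G hG => congrArg card (filter_congr fun T _ => ?_)
        have hFG : F ≤ G := (mem_filter_univ G).1 hG |>.2
        exact ⟨fun hT => ⟨⟨hT.1, hFG.trans hT.2⟩, hT.2⟩, fun hT => ⟨hT.1.1, hT.2⟩⟩
    _ = ∑ T with rk T = k ∧ F ≤ T, #{G ∈ ({G | rk G = r ∧ F ≤ G} : Finset P) | G ≤ T} :=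
        sum_card_bipartiteAbove_eq_sum_card_bipartiteBelow _
    _ = ∑ T with rk T = k ∧ F ≤ T, (k - rk F).choose (r - rk F) := by
        refine sum_congr rfl fun T hT => ?_
        obtain ⟨hTk, hFT⟩ := (mem_filter_univ T).1 hT
        rw [filter_filter, h.card_filter_rk_eq_between hFT hr.le, hTk]
    _ = _ := by rw [sum_const, smul_eq_mul, mul_comm]

end IsSimplicial

end SimplicialPoset

section Flags

variable {P : Type*} [PartialOrder P] {rk : P → ℕ} {n : ℕ}

theorem strictMono_cons_iff_lt_zero {α : Type*} [Preorder α] {a : α} {f : Fin (n + 1) → α} :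
    StrictMono (Fin.cons a f : Fin (n + 2) → α) ↔ a < f 0 ∧ StrictMono f := by
  rw [Fin.strictMono_cons]
  exact and_congr_left fun hf =>
    ⟨fun h => h 0, fun h j => h.trans_le (hf.monotone (Fin.zero_le j))⟩

theorem flagDeg_fin_one (σ : Fin 1 → ℕ) {F : P} (hF : rk F = σ 0) : flagDeg rk σ F = 1 := by
  rw [flagDeg, Nat.card_eq_one_iff_unique]
  refine ⟨⟨fun X Y => ?_⟩, ⟨fun _ => F, rfl, Subsingleton.strictMono _, ?_⟩⟩
  · ext i
    rw [Subsingleton.elim i 0, X.2.1, Y.2.1]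
  · intro j
    rw [Subsingleton.elim j 0, hF, sum_Iic_zero]

theorem strictMono_cons_and_rk_cons_iff (σ : Fin (n + 2) → ℕ) {F : P} (hF : rk F = σ 0)
    (X : Fin (n + 1) → P) :
    (StrictMono (Fin.cons F X : Fin (n + 2) → P) ∧
        ∀ j, rk ((Fin.cons F X : Fin (n + 2) → P) j) = ∑ i ∈ Iic j, σ i) ↔
      F < X 0 ∧ StrictMono X ∧ ∀ j, rk (X j) = ∑ i ∈ Iic j, mergeHead σ i := by
  rw [strictMono_cons_iff_lt_zero, Fin.forall_fin_succ, and_assoc]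
  simp only [Fin.cons_zero, Fin.cons_succ, sum_Iic_zero, hF, sum_Iic_mergeHead, true_and]

theorem flagDeg_eq_card_tails (σ : Fin (n + 2) → ℕ) {F : P} (hF : rk F = σ 0) :
    flagDeg rk σ F = Nat.card {X : Fin (n + 1) → P // F < X 0 ∧ StrictMono X ∧
      ∀ j, rk (X j) = ∑ i ∈ Iic j, mergeHead σ i} := by
  have hcons := strictMono_cons_and_rk_cons_iff σ hF
  have hcons_tail {X : Fin (n + 2) → P} (hX : X 0 = F) : Fin.cons F (Fin.tail X) = X :=
    hX ▸ Fin.cons_self_tail X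
  exact Nat.card_congr
    { toFun := fun X => ⟨Fin.tail X.1, (hcons _).1 ((hcons_tail X.2.1).symm ▸ X.2.2)⟩
      invFun := fun X => ⟨Fin.cons F X.1, rfl, (hcons X.1).2 X.2⟩
      left_inv := fun X => Subtype.ext (hcons_tail X.2.1)
      right_inv := fun _ => rfl }

theorem flagDeg_succ [Fintype P] [DecidableLT P] (σ : Fin (n + 2) → ℕ) {F : P} (hF : rk F = σ 0) :
    flagDeg rk σ F =
      ∑ G with rk G = σ 0 + σ 1 ∧ F < G, flagDeg rk (mergeHead σ) G := by
  classical
  let tails : Finset (Fin (n + 1) → P) :=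
    {X | F < X 0 ∧ StrictMono X ∧ ∀ j, rk (X j) = ∑ i ∈ Iic j, mergeHead σ i}
  have htails : flagDeg rk σ F = #tails := by
    rw [flagDeg_eq_card_tails σ hF, Nat.card_eq_fintype_card, Fintype.card_subtype]
  have hmaps : ∀ X ∈ tails, X 0 ∈ ({G | rk G = σ 0 + σ 1 ∧ F < G} : Finset P) := by
    intro X hX
    obtain ⟨hFX, -, hrk⟩ := (mem_filter_univ X).1 hX
    exact (mem_filter_univ _).2 ⟨(hrk 0).trans (sum_Iic_zero _), hFX⟩
  rw [htails, card_eq_sum_card_fiberwise hmaps]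
  refine sum_congr rfl fun G hG => ?_
  rw [flagDeg, Nat.card_eq_fintype_card, Fintype.card_subtype, filter_filter]
  refine congrArg card (filter_congr fun X _ => ?_)
  have hFG : F < G := ((mem_filter_univ G).1 hG).2
  constructor
  · rintro ⟨⟨-, hX⟩, hX0⟩
    exact ⟨hX0, hX⟩
  · rintro ⟨rfl, hX⟩
    exact ⟨⟨hFG, hX⟩, rfl⟩

end Flags

theorem IsSimplicial.flagDeg_eq {P : Type*} [Fintype P] [PartialOrder P] [OrderBot P]
    [DecidableLE P] {rk : P → ℕ} (h : IsSimplicial rk) {n : ℕ} (σ : Fin (n + 1) → ℕ)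
    (hpos : ∀ i : Fin n, 0 < σ i.succ) {F : P} (hF : rk F = σ 0) :
    flagDeg rk σ F =
      Nat.multinomial univ (Fin.tail σ) * #{T | rk T = ∑ i, σ i ∧ F ≤ T} := by
  classical
  induction n generalizing F with
  | zero =>
    rw [flagDeg_fin_one σ hF, Fin.sum_univ_one, ← hF, h.card_filter_rk_eq_rk_and_le,
      univ_eq_empty, Nat.multinomial_empty]
  | succ n ih =>
    have hlt : rk F < σ 0 + σ 1 := by rw [hF]; exact Nat.lt_add_of_pos_right (hpos 0)
    have hG (G : P) (hG : G ∈ ({G | rk G = σ 0 + σ 1 ∧ F < G} : Finset P)) :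
        flagDeg rk (mergeHead σ) G =
          Nat.multinomial univ (Fin.tail (Fin.tail σ)) * #{T | rk T = ∑ i, σ i ∧ G ≤ T} := by
      rw [ih (mergeHead σ) (fun i => hpos i.succ) ((mem_filter_univ G).1 hG).1, sum_mergeHead]
      rfl
    have hsub : ∑ i, σ i - σ 0 = ∑ i, Fin.tail σ i := by
      rw [Fin.sum_univ_succ, Nat.add_sub_cancel_left]
      rfl
    rw [flagDeg_succ σ hF, sum_congr rfl hG, ← mul_sum, h.sum_card_filter_rk_eq_and_le hlt, hF,
      Nat.add_sub_cancel_left, hsub, multinomial_univ_fin_succ (Fin.tail σ), mul_left_comm,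
      mul_assoc]
    rfl

theorem sum_flagDeg_above_general
    {P : Type*} [Fintype P] [PartialOrder P] [OrderBot P]
    [DecidableRel ((· < ·) : P → P → Prop)]
    (rk : P → ℕ) (hsimp : IsSimplicial rk)
    {m : ℕ} [NeZero m] (σ π : Fin m → ℕ) (hpos : ∀ i, 0 < σ i)
    (e : Equiv.Perm (Fin m)) (hπ : π = σ ∘ e) (h1 : σ 0 < π 0)
    (F : P) (hF : rk F = σ 0) :
    ∑ G ∈ Finset.univ.filter (fun G : P => rk G = π 0 ∧ F < G), flagDeg rk π G =
      (π 0).choose (σ 0) * flagDeg rk σ F := by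
  classical
  obtain ⟨n, rfl⟩ : ∃ n, m = n + 1 := Nat.exists_eq_succ_of_ne_zero (NeZero.ne m)
  subst hπ
  have hlt : rk F < σ (e 0) := hF.trans_lt h1
  have hG (G : P) (hG : G ∈ ({G | rk G = σ (e 0) ∧ F < G} : Finset P)) :
      flagDeg rk (σ ∘ e) G =
        Nat.multinomial univ (Fin.tail (σ ∘ e)) * #{T | rk T = ∑ i, σ i ∧ G ≤ T} := by
    rw [← Equiv.sum_comp e σ]
    exact hsimp.flagDeg_eq (σ ∘ e) (fun i => hpos _) ((mem_filter_univ G).1 hG).1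
  calc ∑ G with rk G = σ (e 0) ∧ F < G, flagDeg rk (σ ∘ e) G
      = Nat.multinomial univ (Fin.tail (σ ∘ e)) *
          ∑ G with rk G = σ (e 0) ∧ F < G, #{T | rk T = ∑ i, σ i ∧ G ≤ T} := by
        rw [mul_sum, sum_congr rfl hG]
    _ = (∑ i, σ i - σ 0).choose (σ (e 0) - σ 0) * Nat.multinomial univ (Fin.tail (σ ∘ e)) *
          #{T | rk T = ∑ i, σ i ∧ F ≤ T} := by
        rw [hsimp.sum_card_filter_rk_eq_and_le hlt, hF]
        ring
    _ = (σ (e 0)).choose (σ 0) * flagDeg rk σ F := by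
        rw [choose_mul_multinomial_tail_comp_perm σ e h1.le, mul_assoc,
          hsimp.flagDeg_eq σ (fun i => hpos _) hF]

/-- Let `P` be a finite pure simplicial poset of rank `k`, `σ` a composition of `k`,
and `π` a rearrangement of `σ` with `σ_1 < π_1` and `π_l = σ_1` for some `l`
(i.e. `π` is obtained by moving the part `π_1 = σ_l` of `σ` to the front).
Then for every rank-`σ_1` element `F`, summing `d^π(G)` over all rank-`π_1`
elements `G` with `F < G` gives `(π_1 choose σ_1) · d^σ(F)`. -/
theorem sum_flagDeg_above
    {P : Type*} [Fintype P] [PartialOrder P] [OrderBot P]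
    [DecidableRel ((· < ·) : P → P → Prop)]
    (rk : P → ℕ) (hsimp : IsSimplicial rk)
    (k : ℕ) (hpure : ∀ x : P, IsMax x → rk x = k)
    {m : ℕ} [NeZero m] (σ π : Fin m → ℕ)
    (hpos : ∀ i, 0 < σ i) (hsum : ∑ i, σ i = k)
    (e : Equiv.Perm (Fin m)) (hπ : π = σ ∘ e)
    (h1 : σ 0 < π 0) (l : Fin m) (hl : π l = σ 0)
    (F : P) (hF : rk F = σ 0) :
    ∑ G ∈ Finset.univ.filter (fun G : P => rk G = π 0 ∧ F < G), flagDeg rk π G =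
      (π 0).choose (σ 0) * flagDeg rk σ F :=
  sum_flagDeg_above_general rk hsimp σ π hpos e hπ h1 F hF
end

section
/- Let Δ be a finite pure abstract simplicial complex of rank k (every maximal face has k vertices) and let 0 < i < k. Then the conjugate of the degree sequence d^{(i,k−i)}(Δ) majorizes the degree sequence d^{(k−i,i)}(Δ): (d^{(i,k−i)}(Δ))^T ⊵ d^{(k−i,i)}(Δ). -/
/-- Majorization `a ⊵ b` of multisets of natural numbers: the total sums agree and,
listing both in weakly decreasing order (padding with zeros, which is immaterial
here), every partial sum of `a` is at least the corresponding partial sum of `b`. -/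
def Majorizes (a b : Multiset ℕ) : Prop :=
  a.sum = b.sum ∧
  ∀ r : ℕ, ((b.sort (· ≥ ·)).take r).sum ≤ ((a.sort (· ≥ ·)).take r).sum

/-- The face-to-face degree sequence `d^{(r,k−r)}(Δ)` of a simplicial complex `Δ`:
the multiset whose entries, indexed by the rank-`r` (i.e. cardinality-`r`) faces `F`
of `Δ`, record the number of rank-`k` faces containing `F`. -/
def faceDegSeq {α : Type*} [DecidableEq α] (Δ : Finset (Finset α)) (r k : ℕ) :
    Multiset ℕ :=
  ((Δ.filter (fun F => F.card = r)).val).map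
    (fun F => (Δ.filter (fun H => H.card = k ∧ F ⊆ H)).card)

/-- The conjugate of `d^{(r,k−r)}(Δ)`: its `i`-th entry (for `i ≥ 1`) is the number
of rank-`r` faces whose degree is at least `i`.  The degree of a face is at most the
number of rank-`k` faces, so indices `i` beyond that bound contribute `0` and may be
omitted (sequences are padded with zeros). -/
def conjFaceDegSeq {α : Type*} [DecidableEq α] (Δ : Finset (Finset α)) (r k : ℕ) :
    Multiset ℕ :=
  (Finset.Icc 1 ((Δ.filter (fun H => H.card = k)).card)).val.map
    (fun i => ((Δ.filter (fun F => F.card = r)).filter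
      (fun F => i ≤ (Δ.filter (fun H => H.card = k ∧ F ⊆ H)).card)).card)

/-!
A rank-`k` face containing a rank-`i` face `F` is determined by its remaining vertices, so the
degree of `F` counts the rank-`(k - i)` faces in the link of `F`. Being in the link of one another
is a symmetric relation between faces of ranks `i` and `k - i`, and the two degree sequences are the
row and column sums of its incidence matrix. The claim is thus the easy half of the Gale–Ryser
theorem: the `r` largest column sums are attained on some `r` columns, to which a row of sum `d`
contributes at most `min r d`, and `∑ min r d` is the sum of the first `r` entries of the conjugate
of the row sums.
-/

section Conjugate

/-- The conjugate `d^T` of a multiset `d` of natural numbers, cut off after its `N`-th entry. If no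
element of `d` exceeds `N`, then only zeros are lost. -/
def conjUpTo (N : ℕ) (d : Multiset ℕ) : Multiset ℕ :=
  (Finset.Icc 1 N).val.map fun j => d.countP (j ≤ ·)

theorem sort_map_Icc_of_antitone {M : Type*} [LinearOrder M] {f : ℕ → M} (hf : Antitone f)
    (N : ℕ) :
    ((Finset.Icc 1 N).val.map f).sort (· ≥ ·) = (List.range' 1 N).map f := by
  have hval : (Finset.Icc 1 N).val = (List.range' 1 N : Multiset ℕ) := rfl
  rw [hval, Multiset.map_coe, Multiset.coe_sort]
  apply List.mergeSort_eq_self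
  exact List.pairwise_map.2 (List.pairwise_lt_range' (s := 1) (n := N) |>.imp fun hlt => hf hlt.le)

theorem sum_take_sort_map_Icc_of_antitone {M : Type*} [LinearOrder M] [AddCommMonoid M]
    {f : ℕ → M} (hf : Antitone f) (N r : ℕ) :
    ((((Finset.Icc 1 N).val.map f).sort (· ≥ ·)).take r).sum =
      ∑ j ∈ Finset.Icc 1 (min r N), f j := by
  have htake : (List.range' 1 N).take r = List.range' 1 (min r N) := by
    apply List.ext_getElem <;> simp
  rw [sort_map_Icc_of_antitone hf, ← List.map_take, htake]
  rfl

theorem antitone_countP_le (d : Multiset ℕ) : Antitone fun j => d.countP (j ≤ ·) := by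
  intro a b hab
  simp only [Multiset.countP_eq_card_filter]
  exact Multiset.card_le_card (Multiset.monotone_filter_right d fun _ hb => hab.trans hb)

theorem sum_Icc_countP_le (d : Multiset ℕ) (M : ℕ) :
    ∑ j ∈ Finset.Icc 1 M, d.countP (j ≤ ·) = (d.map (min M)).sum := by
  induction d using Multiset.induction with
  | empty => simp
  | cons x d ih =>
    have hfilter : {j ∈ Finset.Icc 1 M | j ≤ x} = Finset.Icc 1 (min M x) := by
      ext j; simp [and_assoc]
    simp [Multiset.countP_cons, Finset.sum_add_distrib, ih, hfilter, add_comm]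

variable {N : ℕ} {d : Multiset ℕ}

theorem sum_conjUpTo (hd : ∀ x ∈ d, x ≤ N) : (conjUpTo N d).sum = d.sum := by
  have hmin : d.map (min N) = d :=
    (Multiset.map_congr rfl fun x hx => min_eq_right (hd x hx)).trans d.map_id
  exact (sum_Icc_countP_le d N).trans (congrArg Multiset.sum hmin)

theorem sum_take_sort_conjUpTo (hd : ∀ x ∈ d, x ≤ N) (r : ℕ) :
    (((conjUpTo N d).sort (· ≥ ·)).take r).sum = (d.map (min r)).sum := by
  have hmin : d.map (min (min r N)) = d.map (min r) :=
    Multiset.map_congr rfl fun x hx => by rw [min_assoc, min_eq_right (hd x hx)]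
  rw [conjUpTo, sum_take_sort_map_Icc_of_antitone (antitone_countP_le d), sum_Icc_countP_le, hmin]

end Conjugate

section GaleRyser

open Finset

variable {β γ : Type*}

theorem exists_le_map_eq_of_le_map {f : β → γ} {s : Multiset β} {t : Multiset γ}
    (h : t ≤ s.map f) : ∃ u ≤ s, u.map f = t := by
  induction s using Quotient.inductionOn with | _ l
  induction t using Quotient.inductionOn with | _ l'
  obtain ⟨l₀, hperm, hsub⟩ : l'.Subperm (l.map f) := h
  obtain ⟨l₁, hl₁, rfl⟩ := List.sublist_map_iff.1 hsub
  exact ⟨l₁, hl₁.subperm, Multiset.coe_eq_coe.2 hperm⟩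

theorem exists_subset_sum_take_sort_map_eq {M : Type*} [LinearOrder M] [AddCommMonoid M]
    (s : Finset β) (f : β → M) (r : ℕ) :
    ∃ t ⊆ s, #t ≤ r ∧ (((s.val.map f).sort (· ≥ ·)).take r).sum = ∑ x ∈ t, f x := by
  have hle : ((((s.val.map f).sort (· ≥ ·)).take r : List M) : Multiset M) ≤ s.val.map f := by
    conv_rhs => rw [← Multiset.sort_eq (s.val.map f) (· ≥ ·)]
    exact (List.take_sublist _ _).subperm
  obtain ⟨u, hus, hu⟩ := exists_le_map_eq_of_le_map hle
  refine ⟨⟨u, Multiset.nodup_of_le hus s.nodup⟩, Multiset.subset_of_le hus, ?_, ?_⟩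
  · rw [card_mk, ← Multiset.card_map f u, hu, Multiset.coe_card]
    exact List.length_take_le _ _
  · rw [Finset.sum, hu, Multiset.sum_coe]

theorem majorizes_conjUpTo_bipartiteAbove_bipartiteBelow (R : β → γ → Prop)
    [∀ a b, Decidable (R a b)] {A : Finset β} {B : Finset γ} {N : ℕ}
    (hN : ∀ a ∈ A, #(B.bipartiteAbove R a) ≤ N) :
    Majorizes (conjUpTo N (A.val.map fun a => #(B.bipartiteAbove R a)))
      (B.val.map fun b => #(A.bipartiteBelow R b)) := by
  have hd : ∀ x ∈ A.val.map fun a => #(B.bipartiteAbove R a), x ≤ N := by simpa using hN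
  refine ⟨?_, fun r => ?_⟩
  · rw [sum_conjUpTo hd]
    exact sum_card_bipartiteAbove_eq_sum_card_bipartiteBelow R
  · obtain ⟨T, hTB, hTr, hsum⟩ :=
      exists_subset_sum_take_sort_map_eq B (fun b => #(A.bipartiteBelow R b)) r
    calc (((B.val.map fun b => #(A.bipartiteBelow R b)).sort (· ≥ ·)).take r).sum
        = ∑ b ∈ T, #(A.bipartiteBelow R b) := hsum
      _ = ∑ a ∈ A, #(T.bipartiteAbove R a) :=
          (sum_card_bipartiteAbove_eq_sum_card_bipartiteBelow R).symm
      _ ≤ ∑ a ∈ A, min r #(B.bipartiteAbove R a) := sum_le_sum fun a _ =>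
          le_min ((card_filter_le T _).trans hTr) (card_le_card (filter_subset_filter _ hTB))
      _ = _ := by rw [sum_take_sort_conjUpTo hd, Multiset.map_map]; rfl

end GaleRyser

section Link

open Finset

variable {α : Type*} [DecidableEq α] {Δ : Finset (Finset α)}

/-- `G` is a face of the link of `F` in `Δ`. Stated as a relation, it makes the degree sequences of
`Δ` those of a bipartite graph. -/
abbrev IsLinkFace (Δ : Finset (Finset α)) (F G : Finset α) : Prop :=
  Disjoint F G ∧ F ∪ G ∈ Δ

theorem isLinkFace_comm {F G : Finset α} : IsLinkFace Δ F G ↔ IsLinkFace Δ G F := by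
  rw [IsLinkFace, IsLinkFace, disjoint_comm, union_comm]

theorem card_filter_superset_eq_card_bipartiteAbove_isLinkFace
    (hΔ : IsLowerSet (Δ : Set (Finset α))) (F : Finset α) (j : ℕ) :
    #{H ∈ Δ | #H = #F + j ∧ F ⊆ H} = #({G ∈ Δ | #G = j}.bipartiteAbove (IsLinkFace Δ) F) := by
  refine card_nbij' (· \ F) (F ∪ ·) ?_ ?_ ?_ ?_
  · intro H hH
    obtain ⟨hHΔ, hcard, hFH⟩ := mem_filter.1 hH
    refine mem_bipartiteAbove _ |>.2 ⟨mem_filter.2 ⟨hΔ sdiff_subset hHΔ, ?_⟩, disjoint_sdiff, ?_⟩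
    · rw [card_sdiff_of_subset hFH, hcard, Nat.add_sub_cancel_left]
    · rwa [union_sdiff_of_subset hFH]
  · intro G hG
    obtain ⟨hGΔ, hdisj, hunion⟩ := mem_bipartiteAbove _ |>.1 hG
    refine mem_filter.2 ⟨hunion, ?_, subset_union_left⟩
    rw [card_union_of_disjoint hdisj, (mem_filter.1 hGΔ).2]
  · intro H hH
    exact union_sdiff_of_subset (mem_filter.1 hH).2.2
  · intro G hG
    exact union_sdiff_cancel_left ((mem_bipartiteAbove _).1 hG).2.1

theorem faceDegSeq_eq_map_card_bipartiteAbove (hΔ : IsLowerSet (Δ : Set (Finset α)))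
    {i j k : ℕ} (hk : i + j = k) :
    faceDegSeq Δ i k =
      {F ∈ Δ | #F = i}.val.map fun F => #({G ∈ Δ | #G = j}.bipartiteAbove (IsLinkFace Δ) F) := by
  refine Multiset.map_congr rfl fun F hF => ?_
  obtain rfl : #F = i := (mem_filter.1 hF).2
  rw [← hk, card_filter_superset_eq_card_bipartiteAbove_isLinkFace hΔ]

theorem faceDegSeq_eq_map_card_bipartiteBelow (hΔ : IsLowerSet (Δ : Set (Finset α)))
    {i j k : ℕ} (hk : i + j = k) :
    faceDegSeq Δ j k =
      {G ∈ Δ | #G = j}.val.map fun G => #({F ∈ Δ | #F = i}.bipartiteBelow (IsLinkFace Δ) G) := by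
  rw [faceDegSeq_eq_map_card_bipartiteAbove hΔ ((add_comm j i).trans hk)]
  exact Multiset.map_congr rfl fun G _ =>
    congrArg card (filter_congr fun F _ => isLinkFace_comm)

theorem le_card_filter_of_mem_faceDegSeq {r k x : ℕ} (hx : x ∈ faceDegSeq Δ r k) :
    x ≤ #{H ∈ Δ | #H = k} := by
  obtain ⟨F, -, rfl⟩ := Multiset.mem_map.1 hx
  exact card_le_card (monotone_filter_right Δ fun _ _ hH => hH.1)

theorem conjFaceDegSeq_eq_conjUpTo (Δ : Finset (Finset α)) (r k : ℕ) :
    conjFaceDegSeq Δ r k = conjUpTo #{H ∈ Δ | #H = k} (faceDegSeq Δ r k) :=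
  Multiset.map_congr rfl fun _ _ => (Multiset.countP_map _ _ _).symm

theorem conj_faceDegSeq_majorizes_general (hΔ : IsLowerSet (Δ : Set (Finset α)))
    {i j k : ℕ} (hk : i + j = k) :
    Majorizes (conjFaceDegSeq Δ i k) (faceDegSeq Δ j k) := by
  rw [conjFaceDegSeq_eq_conjUpTo, faceDegSeq_eq_map_card_bipartiteAbove hΔ hk,
    faceDegSeq_eq_map_card_bipartiteBelow hΔ hk]
  refine majorizes_conjUpTo_bipartiteAbove_bipartiteBelow _ fun F hF => ?_
  apply le_card_filter_of_mem_faceDegSeq (r := i)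
  rw [faceDegSeq_eq_map_card_bipartiteAbove hΔ hk]
  exact Multiset.mem_map_of_mem _ hF

end Link

/-- Let `Δ` be a finite pure abstract simplicial complex of rank `k` (nonempty,
closed under subsets, and every maximal face has `k` vertices) and let `0 < i < k`.
Then `(d^{(i,k−i)}(Δ))^T ⊵ d^{(k−i,i)}(Δ)`. -/
theorem conj_faceDegSeq_majorizes
    {α : Type*} [DecidableEq α] (Δ : Finset (Finset α))
    (hne : Δ.Nonempty)
    (hdown : ∀ s ∈ Δ, ∀ t ⊆ s, t ∈ Δ)
    (k : ℕ)
    (hpure : ∀ s ∈ Δ, (∀ t ∈ Δ, s ⊆ t → t = s) → s.card = k)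
    (i : ℕ) (hi : 0 < i) (hik : i < k) :
    Majorizes (conjFaceDegSeq Δ i k) (faceDegSeq Δ (k - i) k) :=
  conj_faceDegSeq_majorizes_general (fun s t hts hs => hdown s hs t hts)
    (Nat.add_sub_cancel' hik.le)
end
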